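/- Let p be a prime, G a finite p-group and H ≤ G a subgroup. Then F(G) ≤ F(H) + ν_p(|G : H|), where F denotes the Frattini length and ν_p the p-adic valuation of the index |G : H|. -/

import Mathlib

/-- The iterated Frattini series: `Φ⁰(G) = G` and `Φⁿ⁺¹(G) = Φ(Φⁿ(G))`,
viewed as subgroups of `G`. -/
def frattiniSeries (G : Type*) [Group G] : ℕ → Subgroup G
  | 0 => ⊤
  | n + 1 => (frattini (frattiniSeries G n)).map (frattiniSeries G n).subtype

/-- The Frattini length: the least `n` with `Φⁿ(G) = {1}`. -/
noncomputable def frattiniLength (G : Type*) [Group G] : ℕ :=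
  sInf {n | frattiniSeries G n = ⊥}

/-!
In a nilpotent group `G` every maximal subgroup is normal, so the preimage of a maximal subgroup
under any homomorphism is again maximal unless it is everything; hence `K ≤ L` implies
`Φ(K) ≤ Φ(L)`. Climb from `H` to `G` along a chain of subgroups, each maximal in the next. Its
length is at most the number `Ω(|G : H|)` of prime factors of the index counted with multiplicity,
and descending it one Frattini subgroup at a time gives `Φ^Ω(|G : H|)(G) ≤ H`, hence
`Φ^(Ω(|G : H|) + n)(G) ≤ Φⁿ(H)` for all `n`. For a `p`-group `Ω(|G : H|) = ν_p(|G : H|)`.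
-/

open Group (IsNilpotent)
open scoped ArithmeticFunction.Omega

section Homomorphism

variable {A B : Type*} [Group A] [Group B]

theorem isCoatom_comap_of_normal {M : Subgroup B} [M.Normal] (hM : IsCoatom M) {f : A →* B}
    (hf : M.comap f ≠ ⊤) : IsCoatom (M.comap f) := by
  refine ⟨hf, fun K hK => (Subgroup.eq_top_iff' K).mpr fun a => ?_⟩
  have hsup : K.map f ⊔ M = ⊤ :=
    hM.2 _ (right_lt_sup.mpr fun h => hK.not_ge (Subgroup.map_le_iff_le_comap.mp h))
  have ha : f a ∈ K.map f ⊔ M := hsup ▸ Subgroup.mem_top (f a)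
  obtain ⟨_, ⟨k, hk, rfl⟩, m, hm, hkm⟩ := Subgroup.mem_sup_of_normal_right.mp ha
  have hka : k⁻¹ * a ∈ M.comap f := by simpa [← hkm] using hm
  simpa using K.mul_mem hk (hK.le hka)

theorem frattini_le_comap_frattini_of_normal (hB : ∀ M : Subgroup B, IsCoatom M → M.Normal)
    (f : A →* B) : frattini A ≤ (frattini B).comap f := by
  simp_rw [frattini, Order.radical, Subgroup.comap_iInf, le_iInf_iff]
  intro M hM
  have := hB M hM
  by_cases hf : M.comap f = ⊤
  · exact hf ▸ le_top
  · exact frattini_le_coatom (isCoatom_comap_of_normal hM hf)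

theorem map_frattini_of_mulEquiv (e : A ≃* B) :
    (frattini A).map e.toMonoidHom = frattini B :=
  e.mapSubgroup.map_radical

end Homomorphism

section FrattiniSeries

variable {G : Type*} [Group G]

/-- The Frattini subgroup `Φ(K)` of a subgroup `K ≤ G`, as a subgroup of the ambient group `G`, so
that the Frattini subgroups of different subgroups can be compared. -/
def frattiniIn (K : Subgroup G) : Subgroup G :=
  (frattini K).map K.subtype

theorem frattiniIn_le (K : Subgroup G) : frattiniIn K ≤ K :=
  Subgroup.map_subtype_le _

theorem frattiniIn_mono [IsNilpotent G] : Monotone (frattiniIn (G := G)) := by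
  intro K L hKL
  have hL (M : Subgroup L) (hM : IsCoatom M) : M.Normal :=
    Subgroup.NormalizerCondition.normal_of_coatom M Group.normalizerCondition_of_isNilpotent hM
  calc
    frattiniIn K = ((frattini K).map (Subgroup.inclusion hKL)).map L.subtype := by
      rw [Subgroup.map_map, Subgroup.subtype_comp_inclusion, frattiniIn]
    _ ≤ frattiniIn L := Subgroup.map_mono <|
      Subgroup.map_le_iff_le_comap.mpr (frattini_le_comap_frattini_of_normal hL _)

theorem frattiniIn_le_of_covBy {M K : Subgroup G} (h : M ⋖ K) : frattiniIn K ≤ M := by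
  let e : Subgroup K ≃o Set.Iic K := Subgroup.MapSubtype.orderIso K
  have hM : IsCoatom (M.subgroupOf K) :=
    (e.symm.isCoatom_iff ⟨M, h.le⟩).mpr ((covBy_iff_coatom_Iic h.le).mp h)
  exact Subgroup.map_le_iff_le_comap.mpr (frattini_le_coatom hM)

theorem map_frattiniIn {A : Type*} [Group A] {f : A →* G} (hf : Function.Injective f)
    (K : Subgroup A) : (frattiniIn K).map f = frattiniIn (K.map f) := by
  rw [frattiniIn, frattiniIn, ← map_frattini_of_mulEquiv (K.equivMapOfInjective f hf),
    Subgroup.map_map, Subgroup.map_map]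
  rfl

theorem frattiniSeries_succ (n : ℕ) :
    frattiniSeries G (n + 1) = frattiniIn (frattiniSeries G n) :=
  rfl

theorem frattiniSeries_antitone : Antitone (frattiniSeries G) :=
  antitone_nat_of_succ_le fun n => frattiniIn_le (frattiniSeries G n)

theorem frattiniSeries_add_le_map [IsNilpotent G] {H : Subgroup G} {m : ℕ}
    (hm : frattiniSeries G m ≤ H) (n : ℕ) :
    frattiniSeries G (m + n) ≤ (frattiniSeries H n).map H.subtype := by
  induction n with
  | zero => simpa [frattiniSeries, ← MonoidHom.range_eq_map] using hm
  | succ n ih =>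
    rw [← add_assoc, frattiniSeries_succ, frattiniSeries_succ, map_frattiniIn H.subtype_injective]
    exact frattiniIn_mono ih

theorem exists_covBy_of_finiteIndex {H : Subgroup G} [H.FiniteIndex] (hH : H ≠ ⊤) :
    ∃ M, H ⋖ M := by
  obtain ⟨M, hHM, hmin⟩ := exists_minimalFor_of_wellFoundedLT (fun M => H < M)
    (fun M => H.index - M.index) ⟨⊤, hH.lt_top⟩
  refine ⟨M, hHM, fun K hHK hKM => ?_⟩
  have : K.FiniteIndex := Subgroup.finiteIndex_of_le hHK.le
  have hMK : M.index < K.index := Subgroup.index_strictAnti hKM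
  have hKH : K.index < H.index := Subgroup.index_strictAnti hHK
  have hle : H.index - M.index ≤ H.index - K.index := hmin hHK (by lia)
  lia

theorem cardFactors_index_strictAnti {H K : Subgroup G} [H.FiniteIndex] (h : H < K) :
    Ω K.index < Ω H.index := by
  have : K.FiniteIndex := Subgroup.finiteIndex_of_le h.le
  have hne : H.relIndex K ≠ 0 := Subgroup.index_ne_zero_of_finite
  have hpos : Ω (H.relIndex K) ≠ 0 := by
    simp [hne, Subgroup.relIndex_eq_one, h.not_ge]
  rw [← Subgroup.relIndex_mul_index h.le,
    ArithmeticFunction.cardFactors_mul hne Subgroup.index_ne_zero_of_finite]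
  lia

theorem frattiniSeries_cardFactors_index_le [IsNilpotent G] (H : Subgroup G) [H.FiniteIndex] :
    frattiniSeries G (Ω H.index) ≤ H := by
  induction hd : Ω H.index using Nat.strong_induction_on generalizing H with
  | _ d ih =>
  subst hd
  rcases eq_or_ne H ⊤ with rfl | hH
  · exact le_top
  obtain ⟨M, hHM⟩ := exists_covBy_of_finiteIndex hH
  have : M.FiniteIndex := Subgroup.finiteIndex_of_le hHM.le
  have hlt := cardFactors_index_strictAnti hHM.lt
  calc
    frattiniSeries G (Ω H.index) ≤ frattiniSeries G (Ω M.index + 1) := frattiniSeries_antitone hlt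
    _ ≤ frattiniIn M := frattiniIn_mono (ih _ hlt M rfl)
    _ ≤ H := frattiniIn_le_of_covBy hHM

theorem frattiniLength_le_subgroup_general [IsNilpotent G] (H : Subgroup G) [H.FiniteIndex]
    (hH : ∃ n, frattiniSeries H n = ⊥) :
    frattiniLength G ≤ frattiniLength H + Ω H.index := by
  have hbot : frattiniSeries H (frattiniLength H) = ⊥ := Nat.sInf_mem hH
  have hle := frattiniSeries_add_le_map (frattiniSeries_cardFactors_index_le H) (frattiniLength H)
  rw [hbot, Subgroup.map_bot, le_bot_iff, add_comm] at hle
  exact Nat.sInf_le hle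

theorem exists_frattiniSeries_eq_bot [Finite G] [IsNilpotent G] : ∃ n, frattiniSeries G n = ⊥ :=
  ⟨_, le_bot_iff.mp (frattiniSeries_cardFactors_index_le ⊥)⟩

theorem cardFactors_index_of_isPGroup {p : ℕ} (hp : p.Prime) (hG : IsPGroup p G) (H : Subgroup G)
    [H.FiniteIndex] : Ω H.index = H.index.factorization p := by
  have : Fact p.Prime := ⟨hp⟩
  obtain ⟨k, hk⟩ := hG.index H
  rw [hk, ArithmeticFunction.cardFactors_apply_prime_pow hp, hp.factorization_pow,
    Finsupp.single_eq_same]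

end FrattiniSeries

/-- For a finite `p`-group `G` and a subgroup `H ≤ G`,
`𝓕(G) ≤ 𝓕(H) + ν_p(|G : H|)`. -/
theorem frattiniLength_le_subgroup (p : ℕ) (hp : p.Prime)
    (G : Type*) [Group G] [Finite G] (hG : IsPGroup p G) (H : Subgroup G) :
    frattiniLength G ≤ frattiniLength H + (H.index).factorization p := by
  have : Fact p.Prime := ⟨hp⟩
  have : IsNilpotent G := hG.isNilpotent
  rw [← cardFactors_index_of_isPGroup hp hG H]
  exact frattiniLength_le_subgroup_general H exists_frattiniSeries_eq_bot
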